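/- Let (N, Ñ) be infinitesimal automorphisms of (H, H̃, S), with weight filtrations W^N, W^Ñ. Then Ker N ∩ (Ker Ñ)^⊥ = Ker N ∩ W^N_{−1}, where (Ker Ñ)^⊥ = {a ∈ H : S(a, b̃) = 0 for all b̃ ∈ Ker Ñ}. -/

import Mathlib

namespace Paper

/-! ### Bilinear pairings between two spaces -/

/-- A bilinear pairing between two complex vector spaces is non-degenerate. -/
def Nondeg {M₁ M₂ : Type*} [AddCommGroup M₁] [Module ℂ M₁] [AddCommGroup M₂] [Module ℂ M₂]
    (S : M₁ →ₗ[ℂ] M₂ →ₗ[ℂ] ℂ) : Prop :=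
  (∀ x : M₁, (∀ y : M₂, S x y = 0) → x = 0) ∧ (∀ y : M₂, (∀ x : M₁, S x y = 0) → y = 0)

/-- The orthogonal complement in `M₂` of a subspace `p ⊆ M₁`, with respect to a
bilinear pairing `S : M₁ × M₂ → ℂ`. -/
def rightOrtho {M₁ M₂ : Type*} [AddCommGroup M₁] [Module ℂ M₁] [AddCommGroup M₂] [Module ℂ M₂]
    (S : M₁ →ₗ[ℂ] M₂ →ₗ[ℂ] ℂ) (p : Submodule ℂ M₁) : Submodule ℂ M₂ where
  carrier := {y | ∀ x ∈ p, S x y = 0}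
  add_mem' := by
    intro a b ha hb x hx
    rw [map_add, ha x hx, hb x hx, add_zero]
  zero_mem' := by
    intro x hx
    simp
  smul_mem' := by
    intro c y hy x hx
    rw [map_smul, hy x hx, smul_zero]

/-- The orthogonal complement in `M₁` of a subspace `q ⊆ M₂`, with respect to a
bilinear pairing `S : M₁ × M₂ → ℂ`. -/
def leftOrtho {M₁ M₂ : Type*} [AddCommGroup M₁] [Module ℂ M₁] [AddCommGroup M₂] [Module ℂ M₂]
    (S : M₁ →ₗ[ℂ] M₂ →ₗ[ℂ] ℂ) (q : Submodule ℂ M₂) : Submodule ℂ M₁ where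
  carrier := {x | ∀ y ∈ q, S x y = 0}
  add_mem' := by
    intro a b ha hb y hy
    simp [map_add, ha y hy, hb y hy]
  zero_mem' := by
    intro y hy
    simp
  smul_mem' := by
    intro c x hx y hy
    simp [map_smul, hx y hy]

/-! ### Graded quotients -/

/-- The quotient of a subspace `p` by (the trace of) a subspace `q`. -/
abbrev GrQ {M : Type*} [AddCommGroup M] [Module ℂ M] (p q : Submodule ℂ M) :=
  p ⧸ Submodule.comap p.subtype q

/-- The map induced on the quotients `p/q → p'/q'` by a linear map sending `p` into `p'`
and `q` into `q'`. -/
def inducedQuot {M₁ M₂ : Type*} [AddCommGroup M₁] [Module ℂ M₁] [AddCommGroup M₂] [Module ℂ M₂]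
    (f : M₁ →ₗ[ℂ] M₂) (p q : Submodule ℂ M₁) (p' q' : Submodule ℂ M₂)
    (h1 : p ≤ Submodule.comap f p') (h2 : q ≤ Submodule.comap f q') :
    GrQ p q →ₗ[ℂ] GrQ p' q' :=
  Submodule.mapQ _ _ (f.restrict fun x hx => Submodule.mem_comap.mp (h1 hx))
    (by
      intro x hx
      simp only [Submodule.mem_comap, Submodule.subtype_apply] at hx ⊢
      have hfx : f (x : M₁) ∈ q' := Submodule.mem_comap.mp (h2 hx)
      simpa [LinearMap.restrict_apply] using hfx)

variable {H : Type*} [AddCommGroup H] [Module ℂ H]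

/-! ### Weight filtrations -/

/-- `W` is the weight filtration of the nilpotent endomorphism `N`: an increasing filtration,
equal to `0` for small indices and to the whole space for large indices, such that
`N (W i) ⊆ W (i - 2)` and such that for every `i ≥ 0` the map `Gr_i → Gr_{-i}` induced
by `N ^ i` on the graded pieces `Gr_i = W i / W (i-1)` is an isomorphism. -/
structure IsWeightFiltration (N : Module.End ℂ H) (W : ℤ → Submodule ℂ H) : Prop where
  mono : Monotone W
  eventually_bot : ∃ a : ℤ, ∀ i ≤ a, W i = ⊥
  eventually_top : ∃ b : ℤ, ∀ i : ℤ, b ≤ i → W i = ⊤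
  map_le : ∀ i : ℤ, W i ≤ Submodule.comap N (W (i - 2))
  gr_bijective : ∀ i : ℕ,
    ∀ (h1 : W (i : ℤ) ≤ Submodule.comap (N ^ i) (W (-(i : ℤ))))
      (h2 : W ((i : ℤ) - 1) ≤ Submodule.comap (N ^ i) (W (-(i : ℤ) - 1))),
      Function.Bijective
        (inducedQuot (N ^ i) (W (i : ℤ)) (W ((i : ℤ) - 1)) (W (-(i : ℤ))) (W (-(i : ℤ) - 1))
          h1 h2)

/-!
Since `H'` is identified with the dual of `H` and `N'` with minus the transpose of `N`, the kernel
of `N'` is the annihilator of the image of `N`, so that `(Ker N')^⊥ = Im N`. The weight filtration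
satisfies `W (-i) ⊆ Im (N ^ i)` and `Ker (N ^ i) ⊆ W (i - 1)` for `i ≥ 0`: both follow by descending
induction on `i`, from the surjectivity and the injectivity of `Gr_i → Gr_{-i}` respectively. If
`x = N y` is killed by `N`, then `y ∈ Ker (N ^ 2) ⊆ W 1`, hence `x ∈ W (-1)`.
-/

section Pairing

variable {H' : Type*} [AddCommGroup H'] [Module ℂ H'] {S : H →ₗ[ℂ] H' →ₗ[ℂ] ℂ}

theorem Nondeg.bijective_flip [FiniteDimensional ℂ H] (hS : Nondeg S) :
    Function.Bijective S.flip := by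
  have injective_left : Function.Injective S :=
    (injective_iff_map_eq_zero S).2 fun x hx => hS.1 x fun y => by rw [hx, LinearMap.zero_apply]
  have injective_right : Function.Injective S.flip :=
    (injective_iff_map_eq_zero S.flip).2 fun y hy => hS.2 y fun x => LinearMap.congr_fun hy x
  exact (LinearMap.IsPerfPair.of_injective injective_left injective_right).bijective_right

theorem leftOrtho_rightOrtho (hS : Function.Surjective S.flip) (p : Submodule ℂ H) :
    leftOrtho S (rightOrtho S p) = p := by
  ext x
  rw [← Subspace.forall_mem_dualAnnihilator_apply_eq_zero_iff p x, hS.forall]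
  simp only [Submodule.mem_dualAnnihilator]
  rfl

theorem ker_eq_rightOrtho_range (hS : Function.Injective S.flip)
    {N : Module.End ℂ H} {N' : Module.End ℂ H'}
    (hNN' : ∀ (a : H) (b : H'), S (N a) b + S a (N' b) = 0) :
    LinearMap.ker N' = rightOrtho S (LinearMap.range N) := by
  ext b
  calc N' b = 0 ↔ ∀ a, S a (N' b) = 0 := by
        rw [← map_eq_zero_iff S.flip hS, LinearMap.ext_iff]
        rfl
    _ ↔ ∀ a, S (N a) b = 0 :=
        forall_congr' fun a => by rw [eq_neg_of_add_eq_zero_left (hNN' a b), neg_eq_zero]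
    _ ↔ b ∈ rightOrtho S (LinearMap.range N) :=
        (Set.forall_mem_range (p := fun x => S x b = 0)).symm

theorem leftOrtho_ker_eq_range (hS : Function.Bijective S.flip)
    {N : Module.End ℂ H} {N' : Module.End ℂ H'}
    (hNN' : ∀ (a : H) (b : H'), S (N a) b + S a (N' b) = 0) :
    leftOrtho S (LinearMap.ker N') = LinearMap.range N := by
  rw [ker_eq_rightOrtho_range hS.injective hNN', leftOrtho_rightOrtho hS.surjective]

end Pairing

section InducedQuot

variable {M₁ M₂ : Type*} [AddCommGroup M₁] [Module ℂ M₁] [AddCommGroup M₂] [Module ℂ M₂]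
  {f : M₁ →ₗ[ℂ] M₂} {p q : Submodule ℂ M₁} {p' q' : Submodule ℂ M₂}
  {hp : p ≤ Submodule.comap f p'} {hq : q ≤ Submodule.comap f q'}

theorem inf_comap_le_of_injective_inducedQuot
    (hf : Function.Injective (inducedQuot f p q p' q' hp hq)) :
    p ⊓ Submodule.comap f q' ≤ q := by
  rintro x ⟨hxp, hfx⟩
  have map_mk_eq_zero : inducedQuot f p q p' q' hp hq (Submodule.Quotient.mk ⟨x, hxp⟩) = 0 :=
    (Submodule.Quotient.mk_eq_zero _).2 hfx
  exact (Submodule.Quotient.mk_eq_zero (q.comap p.subtype)).1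
    ((map_eq_zero_iff _ hf).1 map_mk_eq_zero)

theorem le_map_sup_of_surjective_inducedQuot
    (hf : Function.Surjective (inducedQuot f p q p' q' hp hq)) :
    p' ≤ Submodule.map f p ⊔ q' := by
  intro x hx
  obtain ⟨c, hc⟩ := hf (Submodule.Quotient.mk ⟨x, hx⟩)
  obtain ⟨y, rfl⟩ := Submodule.Quotient.mk_surjective _ c
  have sub_mem : x - f y ∈ q' := (Submodule.Quotient.eq (q'.comap p'.subtype)).1 hc.symm
  exact Submodule.mem_sup.2
    ⟨f y, Submodule.mem_map_of_mem y.2, x - f y, sub_mem, add_sub_cancel _ _⟩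

end InducedQuot

namespace IsWeightFiltration

variable {N : Module.End ℂ H} {W : ℤ → Submodule ℂ H}

theorem le_comap_pow (hW : IsWeightFiltration N W) (k : ℕ) (i : ℤ) :
    W i ≤ Submodule.comap (N ^ k) (W (i - 2 * k)) := by
  induction k generalizing i with
  | zero => simp [Module.End.one_eq_id]
  | succ k ih =>
    intro x hx
    have hNx : (N ^ k) (N x) ∈ W (i - 2 - 2 * k) := ih (i - 2) (hW.map_le i hx)
    rw [Submodule.mem_comap, pow_succ, Module.End.mul_apply]
    convert hNx using 2
    push_cast
    ring

theorem exists_bijective_inducedQuot (hW : IsWeightFiltration N W) (i : ℕ) :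
    ∃ (h1 : W i ≤ Submodule.comap (N ^ i) (W (-i)))
      (h2 : W (i - 1) ≤ Submodule.comap (N ^ i) (W (-i - 1))),
      Function.Bijective (inducedQuot (N ^ i) (W i) (W (i - 1)) (W (-i)) (W (-i - 1)) h1 h2) := by
  have h1 := hW.le_comap_pow i i
  have h2 := hW.le_comap_pow i (i - 1)
  rw [show (i : ℤ) - 2 * i = -i by ring] at h1
  rw [show (i : ℤ) - 1 - 2 * i = -i - 1 by ring] at h2
  exact ⟨h1, h2, hW.gr_bijective i h1 h2⟩

theorem inf_comap_pow_le (hW : IsWeightFiltration N W) (i : ℕ) :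
    W i ⊓ Submodule.comap (N ^ i) (W (-i - 1)) ≤ W (i - 1) :=
  let ⟨_, _, h⟩ := hW.exists_bijective_inducedQuot i
  inf_comap_le_of_injective_inducedQuot h.injective

theorem neg_le_map_pow_sup (hW : IsWeightFiltration N W) (i : ℕ) :
    W (-i) ≤ Submodule.map (N ^ i) (W i) ⊔ W (-i - 1) :=
  let ⟨_, _, h⟩ := hW.exists_bijective_inducedQuot i
  le_map_sup_of_surjective_inducedQuot h.surjective

theorem neg_le_range_pow (hW : IsWeightFiltration N W) (i : ℕ) :
    W (-i) ≤ LinearMap.range (N ^ i) := by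
  obtain ⟨a, ha⟩ := hW.eventually_bot
  obtain ⟨n, hin, hn⟩ : ∃ n : ℕ, i ≤ n ∧ W (-n) = ⊥ :=
    ⟨max i (-a).toNat, le_max_left _ _, ha _ (by lia)⟩
  induction hin using Nat.decreasingInduction with
  | self => exact hn.le.trans bot_le
  | of_succ j _ ih =>
    calc W (-j) ≤ Submodule.map (N ^ j) (W j) ⊔ W (-j - 1) := hW.neg_le_map_pow_sup j
      _ = Submodule.map (N ^ j) (W j) ⊔ W (-(j + 1 : ℕ)) := by rw [Nat.cast_succ, neg_add']
      _ ≤ LinearMap.range (N ^ j) ⊔ LinearMap.range (N ^ (j + 1)) :=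
        sup_le_sup LinearMap.map_le_range ih
      _ = LinearMap.range (N ^ j) := sup_eq_left.2 (N.iterateRange.monotone j.le_succ)

theorem ker_pow_le (hW : IsWeightFiltration N W) (i : ℕ) :
    LinearMap.ker (N ^ i) ≤ W (i - 1) := by
  obtain ⟨b, hb⟩ := hW.eventually_top
  obtain ⟨n, hin, hn⟩ : ∃ n : ℕ, i ≤ n ∧ W (n - 1) = ⊤ :=
    ⟨max i (b + 1).toNat, le_max_left _ _, hb _ (by lia)⟩
  induction hin using Nat.decreasingInduction with
  | self => exact le_top.trans hn.ge
  | of_succ j _ ih =>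
    have ker_le : LinearMap.ker (N ^ j) ≤ W j :=
      calc LinearMap.ker (N ^ j) ≤ LinearMap.ker (N ^ (j + 1)) :=
            N.iterateKer.monotone j.le_succ
        _ ≤ W ((j + 1 : ℕ) - 1) := ih
        _ = W j := by rw [Nat.cast_succ, add_sub_cancel_right]
    exact (le_inf ker_le (LinearMap.ker_le_comap _)).trans (hW.inf_comap_pow_le j)

theorem ker_inf_range_pow (hW : IsWeightFiltration N W) (i : ℕ) :
    LinearMap.ker N ⊓ LinearMap.range (N ^ i) = LinearMap.ker N ⊓ W (-i) := by
  refine le_antisymm (le_inf inf_le_left ?_) (inf_le_inf_left _ (hW.neg_le_range_pow i))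
  rintro _ ⟨hx, y, rfl⟩
  have y_mem_ker : y ∈ LinearMap.ker (N ^ (i + 1)) := by
    rwa [LinearMap.mem_ker, pow_succ', Module.End.mul_apply]
  have y_mem : y ∈ W i := by simpa using hW.ker_pow_le (i + 1) y_mem_ker
  obtain ⟨h, -⟩ := hW.exists_bijective_inducedQuot i
  exact h y_mem

end IsWeightFiltration

theorem ker_inf_ortho_ker_eq_general {H' : Type*} [AddCommGroup H'] [Module ℂ H']
    {S : H →ₗ[ℂ] H' →ₗ[ℂ] ℂ} (hS : Function.Bijective S.flip)
    {N : Module.End ℂ H} {N' : Module.End ℂ H'}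
    (hNN' : ∀ (a : H) (b : H'), S (N a) b + S a (N' b) = 0)
    {W : ℤ → Submodule ℂ H} (hW : IsWeightFiltration N W) :
    LinearMap.ker N ⊓ leftOrtho S (LinearMap.ker N') = LinearMap.ker N ⊓ W (-1) := by
  rw [leftOrtho_ker_eq_range hS hNN']
  simpa using hW.ker_inf_range_pow 1

/-- For infinitesimal automorphisms `(N, N')` of `(H, H', S)`:
`Ker N ∩ (Ker N')^⊥ = Ker N ∩ W^N_{-1}`. -/
theorem ker_inf_ortho_ker_eq [FiniteDimensional ℂ H]
    {H' : Type*} [AddCommGroup H'] [Module ℂ H'] [FiniteDimensional ℂ H']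
    (S : H →ₗ[ℂ] H' →ₗ[ℂ] ℂ) (hS : Nondeg S)
    {N : Module.End ℂ H} {N' : Module.End ℂ H'}
    (hN : IsNilpotent N) (hN' : IsNilpotent N')
    (hNN' : ∀ (a : H) (b : H'), S (N a) b + S a (N' b) = 0)
    {W : ℤ → Submodule ℂ H} {W' : ℤ → Submodule ℂ H'}
    (hW : IsWeightFiltration N W) (hW' : IsWeightFiltration N' W') :
    LinearMap.ker N ⊓ leftOrtho S (LinearMap.ker N') = LinearMap.ker N ⊓ W (-1) :=
  ker_inf_ortho_ker_eq_general hS.bijective_flip hNN' hW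

end Paper
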